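/- Let φ : ℝ² → ℝ be a nonnegative, twice continuously differentiable, strictly convex function, let ψ = |·|² + φ, and let σ be the projection measure on the graph of ψ. Let r, ρ > 0 with ρ > 3r and y₀ ∈ ℝ². Then the convolution of the measures 𝟙_{B_r(y₀)}σ and 𝟙_{B_ρ(y₀)ᶜ}σ is absolutely continuous with respect to Lebesgue measure on ℝ³ and its Radon–Nikodym derivative is bounded Lebesgue-almost everywhere by (1/2)·arcsin(2r/(ρ − r)). Moreover, if B and B′ are disjoint open balls in ℝ², then the Radon–Nikodym derivative of 𝟙_B σ ∗ 𝟙_{B′} σ is bounded Lebesgue-almost everywhere by π/4. -/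

import Mathlib

open MeasureTheory Filter
open scoped ENNReal

noncomputable section

abbrev R2 : Type := EuclideanSpace ℝ (Fin 2)
abbrev R3 : Type := R2 × ℝ

/-- Pushforward under `y ↦ (y, Ψ y)` of the measure with density `g`
with respect to Lebesgue measure on `ℝ²`. -/
def wProj (Ψ : R2 → ℝ) (g : R2 → ℝ) : Measure R3 :=
  Measure.map (fun y => (y, Ψ y)) (volume.withDensity fun y => ENNReal.ofReal (g y))

/-- Convolution of Borel measures on `ℝ³`. -/
def mconv (μ ν : Measure R3) : Measure R3 :=
  Measure.map (fun p : R3 × R3 => p.1 + p.2) (μ.prod ν)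

/-!
The density of the convolution at `(ξ, τ)` measures the set of `y ∈ S` with `ξ - y ∈ T` and
`ψ y + ψ (ξ - y) = τ`. Centre at `c = ξ / 2`: if `ψ` is `m`-strongly convex, then
`w ↦ ψ (c + w) + ψ (c - w) - m * ‖w‖ ^ 2` is convex and even, hence increasing along rays from the
origin. As a function of the squared radius, `ψ (c + w) + ψ (c - w)` is therefore expanding by a
factor at least `m` on each ray, so every direction contributes at most `1 / (2 * m)` to the
density, which is thus at most `1 / (2 * m)` times the measure of the set of admissible directions.
A ball far away from its reflection is seen from `c` under a small angle, and for disjoint `S` and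
`T` the reflection `y ↦ ξ - y` shows that only half of all directions can count.
-/

section Convolution

variable {E F : Type*} [MeasurableSpace E] [MeasurableSpace F]

lemma absolutelyContinuous_and_rnDeriv_le_of_le_smul {μ ν : Measure E} [SigmaFinite ν] {C : ℝ≥0∞}
    (h : μ ≤ C • ν) : μ ≪ ν ∧ ∀ᵐ x ∂ν, μ.rnDeriv ν x ≤ C := by
  refine ⟨Measure.absolutelyContinuous_of_le_smul h, ?_⟩
  refine ae_le_of_forall_setLIntegral_le_of_sigmaFinite (g := fun _ => C)
    (Measure.measurable_rnDeriv μ ν) fun A _ _ => ?_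
  calc ∫⁻ x in A, μ.rnDeriv ν x ∂ν ≤ μ A := Measure.setLIntegral_rnDeriv_le A
    _ ≤ (C • ν) A := h A
    _ = ∫⁻ _ in A, C ∂ν := by rw [setLIntegral_const, Measure.smul_apply, smul_eq_mul]

/-- The projection measure on the part of the graph of `Ψ` lying over `S`: the pushforward of
`μ.restrict S` under `y ↦ (y, Ψ y)`. -/
def graphMeasure (μ : Measure E) (Ψ : E → F) (S : Set E) : Measure (E × F) :=
  (μ.restrict S).map fun y => (y, Ψ y)

/-- The fibre of the sum of two pieces of a graph: the points `y ∈ S` with `ξ - y ∈ T` for which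
the points of the graph of `Ψ` over `y` and `ξ - y` add up to an element of `{ξ} ×ˢ D`. -/
def sumFiber {E F : Type*} [Sub E] [Add F] (Ψ : E → F) (S T : Set E) (ξ : E) (D : Set F) :
    Set E :=
  {y | (y ∈ S ∧ ξ - y ∈ T) ∧ Ψ y + Ψ (ξ - y) ∈ D}

variable [AddCommGroup E] {μ : Measure E} {Ψ : E → F} {S T : Set E}

lemma measurableSet_sumFiber [MeasurableSub E] [Add F] [MeasurableAdd₂ F] (hΨ : Measurable Ψ)
    (hS : MeasurableSet S) (hT : MeasurableSet T) (ξ : E) {D : Set F} (hD : MeasurableSet D) :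
    MeasurableSet (sumFiber Ψ S T ξ D) := by
  have hreflect : Measurable fun y : E => ξ - y := measurable_const_sub ξ
  exact (hS.inter (hreflect hT)).inter (hΨ.add (hΨ.comp hreflect) hD)

lemma conv_graphMeasure_apply [MeasurableAdd₂ E] [MeasurableNeg E] [SFinite μ]
    [μ.IsAddLeftInvariant] [AddMonoid F] [MeasurableAdd₂ F] (hΨ : Measurable Ψ)
    (hS : MeasurableSet S) (hT : MeasurableSet T) {A : Set (E × F)} (hA : MeasurableSet A) :
    (graphMeasure μ Ψ S).conv (graphMeasure μ Ψ T) A =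
      ∫⁻ ξ, μ (sumFiber Ψ S T ξ (Prod.mk ξ ⁻¹' A)) ∂μ := by
  have hgraph : Measurable fun y => (y, Ψ y) := measurable_id.prodMk hΨ
  set graphSum : E × E → E × F := fun p => (p.1 + p.2, Ψ p.1 + Ψ p.2) with hgraphSum
  have hgraphSum_meas : Measurable graphSum := by fun_prop
  have hadd : Measurable fun p : (E × F) × E × F => p.1 + p.2 :=
    (by fun_prop : Measurable fun p : (E × F) × E × F => (p.1.1 + p.2.1, p.1.2 + p.2.2))
  have hpairs : MeasurableSet (graphSum ⁻¹' A ∩ S ×ˢ T) :=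
    (hgraphSum_meas hA).inter (hS.prod hT)
  have hshear := measurePreserving_prod_neg_add_swap μ μ
  calc (graphMeasure μ Ψ S).conv (graphMeasure μ Ψ T) A
      = μ.prod μ (graphSum ⁻¹' A ∩ S ×ˢ T) := by
        rw [Measure.conv, graphMeasure, graphMeasure, Measure.map_prod_map _ _ hgraph hgraph,
          Measure.map_map hadd (hgraph.prodMap hgraph), Measure.prod_restrict,
          Measure.map_apply (hadd.comp (hgraph.prodMap hgraph)) hA,
          ← Measure.restrict_apply (hgraphSum_meas hA)]
        rfl
    _ = ∫⁻ ξ, μ (sumFiber Ψ S T ξ (Prod.mk ξ ⁻¹' A)) ∂μ := by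
        rw [← hshear.measure_preimage hpairs.nullMeasurableSet,
          Measure.prod_apply (hshear.measurable hpairs)]
        refine lintegral_congr fun ξ => congrArg μ (Set.ext fun y => ?_)
        simp [hgraphSum, sumFiber, sub_eq_neg_add, and_comm]

lemma conv_graphMeasure_le_smul [MeasurableAdd₂ E] [MeasurableNeg E] [SFinite μ]
    [μ.IsAddLeftInvariant] [AddMonoid F] [MeasurableAdd₂ F] {ν : Measure F} [SFinite ν]
    (hΨ : Measurable Ψ) (hS : MeasurableSet S) (hT : MeasurableSet T) {C : ℝ≥0∞}
    (h : ∀ ξ D, MeasurableSet D → μ (sumFiber Ψ S T ξ D) ≤ C * ν D) :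
    (graphMeasure μ Ψ S).conv (graphMeasure μ Ψ T) ≤ C • μ.prod ν := by
  refine Measure.le_iff.2 fun A hA => ?_
  rw [conv_graphMeasure_apply hΨ hS hT hA, Measure.smul_apply, smul_eq_mul,
    Measure.prod_apply hA, ← lintegral_const_mul _ (measurable_measure_prodMk_left hA)]
  exact lintegral_mono fun ξ => h ξ _ (measurable_prodMk_left hA)

lemma two_mul_measure_sumFiber_le [MeasurableAdd E] [MeasurableNeg E] [μ.IsNegInvariant]
    [μ.IsAddLeftInvariant] [AddCommMagma F] [MeasurableAdd₂ F]
    (hΨ : Measurable Ψ) (hS : MeasurableSet S) (hT : MeasurableSet T) (hST : Disjoint S T)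
    (ξ : E) {D : Set F} (hD : MeasurableSet D) :
    2 * μ (sumFiber Ψ S T ξ D) ≤ μ (sumFiber Ψ Set.univ Set.univ ξ D) := by
  have hreflect : (ξ - ·) ⁻¹' sumFiber Ψ S T ξ D = sumFiber Ψ T S ξ D := by
    ext y
    simp [sumFiber, and_comm, add_comm]
  have hdisj : Disjoint (sumFiber Ψ S T ξ D) (sumFiber Ψ T S ξ D) :=
    hST.mono_left (fun _ hy => hy.1.1) |>.mono_right fun _ hy => hy.1.1
  calc 2 * μ (sumFiber Ψ S T ξ D)
      = μ (sumFiber Ψ S T ξ D) + μ (sumFiber Ψ T S ξ D) := by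
        rw [two_mul, ← hreflect, (Measure.measurePreserving_sub_left μ ξ).measure_preimage
          (measurableSet_sumFiber hΨ hS hT ξ hD).nullMeasurableSet]
    _ = μ (sumFiber Ψ S T ξ D ∪ sumFiber Ψ T S ξ D) :=
        (measure_union hdisj (measurableSet_sumFiber hΨ hT hS ξ hD)).symm
    _ ≤ μ (sumFiber Ψ Set.univ Set.univ ξ D) := by
        refine measure_mono (Set.union_subset ?_ ?_) <;>
          exact fun y hy => ⟨⟨trivial, trivial⟩, hy.2⟩

end Convolution

section Radial

lemma volume_inter_preimage_le_of_expanding {g : ℝ → ℝ} {m : ℝ} (hm : 0 < m) {A : Set ℝ}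
    (hg : ∀ u ∈ A, ∀ v ∈ A, m * |u - v| ≤ |g u - g v|) (D : Set ℝ) :
    volume (A ∩ g ⁻¹' D) ≤ ENNReal.ofReal m⁻¹ * volume D := by
  have hanti : AntilipschitzWith m⁻¹.toNNReal (A.domRestrict g) :=
    AntilipschitzWith.of_le_mul_dist fun u v => by
      rw [Real.coe_toNNReal _ (inv_nonneg.2 hm.le), le_inv_mul_iff₀ hm]
      exact hg u u.2 v v.2
  have himage : A ∩ g ⁻¹' D = (↑) '' (A.domRestrict g ⁻¹' D) := by
    rw [Set.domRestrict_eq, Set.preimage_comp, Subtype.image_preimage_coe]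
  have hle := hanti.hausdorffMeasure_preimage_le zero_le_one D
  rwa [← isometry_subtype_coe.hausdorffMeasure_image (.inl zero_le_one), ← himage,
    hausdorffMeasure_real, ENNReal.rpow_one] at hle

lemma mul_abs_sub_le_abs_comp_sqrt_sub {f : ℝ → ℝ} {m : ℝ}
    (hf : MonotoneOn (fun s => f s - m * s ^ 2) (Set.Ici 0)) {u v : ℝ} (hu : 0 ≤ u) (hv : 0 ≤ v) :
    m * |u - v| ≤ |f √u - f √v| := by
  wlog huv : v ≤ u generalizing u v
  · rw [abs_sub_comm u, abs_sub_comm (f √u)]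
    exact this hv hu (le_of_not_ge huv)
  have hmono := hf (Real.sqrt_nonneg v) (Real.sqrt_nonneg u) (Real.sqrt_le_sqrt huv)
  simp only [Real.sq_sqrt hu, Real.sq_sqrt hv] at hmono
  rw [abs_of_nonneg (sub_nonneg.2 huv)]
  exact le_trans (by linarith) (le_abs_self _)

-- The substitution `u = s ^ 2` turns `s ds` into `du / 2` and makes `f` expanding by a factor `m`.
lemma lintegral_ofReal_mul_indicator_comp_le {f : ℝ → ℝ} {m : ℝ} (hm : 0 < m)
    (hf : MonotoneOn (fun s => f s - m * s ^ 2) (Set.Ici 0)) (D : Set ℝ) :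
    ∫⁻ s in Set.Ioi 0, ENNReal.ofReal s * D.indicator 1 (f s) ≤
      ENNReal.ofReal (1 / (2 * m)) * volume D := by
  have hinj : Set.InjOn (fun s : ℝ => s ^ 2) (Set.Ioi 0) := fun s hs t ht hst =>
    (pow_left_inj₀ (le_of_lt hs) (le_of_lt ht) two_ne_zero).1 hst
  have himage : (fun s : ℝ => s ^ 2) '' Set.Ioi 0 ⊆ Set.Ioi 0 :=
    Set.image_subset_iff.2 fun s hs => pow_pos (Set.mem_Ioi.1 hs) 2
  calc ∫⁻ s in Set.Ioi 0, ENNReal.ofReal s * D.indicator 1 (f s)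
      = ∫⁻ s in Set.Ioi 0, ENNReal.ofReal (1 / 2) *
          (ENNReal.ofReal |2 * s| * D.indicator 1 (f √(s ^ 2))) := by
        refine setLIntegral_congr_fun measurableSet_Ioi fun s hs => ?_
        have hs0 : 0 ≤ s := le_of_lt hs
        rw [Real.sqrt_sq hs0, ← mul_assoc, ← ENNReal.ofReal_mul (by norm_num), abs_of_nonneg
          (by positivity), one_div, inv_mul_cancel_left₀ two_ne_zero]
    _ = ENNReal.ofReal (1 / 2) *
          ∫⁻ u in (fun s : ℝ => s ^ 2) '' Set.Ioi 0, D.indicator 1 (f √u) := by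
        rw [lintegral_const_mul' _ _ ENNReal.ofReal_ne_top,
          lintegral_image_eq_lintegral_abs_deriv_mul measurableSet_Ioi
            (fun s _ => by simpa using (hasDerivAt_pow 2 s).hasDerivWithinAt) hinj]
    _ ≤ ENNReal.ofReal (1 / 2) *
          ∫⁻ u in Set.Ioi 0, ((fun u => f √u) ⁻¹' D).indicator 1 u := by
        gcongr ENNReal.ofReal (1 / 2) * ?_
        exact lintegral_mono_set himage
    _ ≤ ENNReal.ofReal (1 / 2) * volume (Set.Ioi 0 ∩ (fun u => f √u) ⁻¹' D) := by
        gcongr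
        refine (lintegral_indicator_one_le _).trans_eq ?_
        rw [Measure.restrict_apply' measurableSet_Ioi, Set.inter_comm]
    _ ≤ ENNReal.ofReal (1 / 2) * (ENNReal.ofReal m⁻¹ * volume D) := by
        gcongr
        exact volume_inter_preimage_le_of_expanding hm
          (fun u hu v hv => mul_abs_sub_le_abs_comp_sqrt_sub hf (le_of_lt hu) (le_of_lt hv)) D
    _ = ENNReal.ofReal (1 / (2 * m)) * volume D := by
        rw [← mul_assoc, ← ENNReal.ofReal_mul (by norm_num), one_div, one_div, mul_inv]

lemma setLIntegral_arg_preimage_eq {h : ℂ → ℝ≥0∞} (hh : Measurable h) {Θ : Set ℝ}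
    (hΘ : MeasurableSet Θ) :
    ∫⁻ z in Complex.arg ⁻¹' Θ, h z =
      ∫⁻ θ in Set.Ioo (-Real.pi) Real.pi ∩ Θ, ∫⁻ s in Set.Ioi (0 : ℝ),
        ENNReal.ofReal s * h (s * (Real.cos θ + Real.sin θ * Complex.I)) := by
  have hmeas : Measurable fun p : ℝ × ℝ =>
      ENNReal.ofReal p.1 * h (p.1 * (Real.cos p.2 + Real.sin p.2 * Complex.I)) := by fun_prop
  calc ∫⁻ z in Complex.arg ⁻¹' Θ, h z
      = ∫⁻ p in Set.Ioi (0 : ℝ) ×ˢ Set.Ioo (-Real.pi) Real.pi, ENNReal.ofReal p.1 *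
          (Complex.arg ⁻¹' Θ).indicator h (Complex.polarCoord.symm p) := by
        rw [← lintegral_indicator (Complex.measurable_arg hΘ),
          ← Complex.lintegral_comp_polarCoord_symm]
        rfl
    _ = ∫⁻ p in Set.Ioi (0 : ℝ) ×ˢ Set.Ioo (-Real.pi) Real.pi, (Prod.snd ⁻¹' Θ).indicator
          (fun p => ENNReal.ofReal p.1 *
            h (p.1 * (Real.cos p.2 + Real.sin p.2 * Complex.I))) p := by
        refine setLIntegral_congr_fun (measurableSet_Ioi.prod measurableSet_Ioo) fun p hp => ?_
        have harg : Complex.arg (p.1 * (Real.cos p.2 + Real.sin p.2 * Complex.I)) = p.2 :=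
          mod_cast Complex.arg_mul_cos_add_sin_mul_I hp.1 (Set.Ioo_subset_Ioc_self hp.2)
        by_cases hθ : p.2 ∈ Θ <;>
          simp only [Complex.polarCoord_symm_apply, Set.indicator, Set.mem_preimage, harg, hθ,
            if_true, if_false, mul_zero]
    _ = ∫⁻ p in Set.Ioi (0 : ℝ) ×ˢ (Set.Ioo (-Real.pi) Real.pi ∩ Θ), ENNReal.ofReal p.1 *
          h (p.1 * (Real.cos p.2 + Real.sin p.2 * Complex.I)) := by
        rw [setLIntegral_indicator (measurable_snd hΘ)]
        congr 2
        ext p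
        simp only [Set.mem_inter_iff, Set.mem_preimage, Set.mem_prod]
        tauto
    _ = _ := by
        rw [Measure.volume_eq_prod, ← Measure.prod_restrict,
          lintegral_prod_symm _ hmeas.aemeasurable]

lemma volume_arg_preimage_inter_preimage_le {g : ℂ → ℝ} (hg : Measurable g) {m : ℝ} (hm : 0 < m)
    (hmono : ∀ z : ℂ, ‖z‖ = 1 → MonotoneOn (fun s : ℝ => g (s * z) - m * s ^ 2) (Set.Ici 0))
    {Θ : Set ℝ} (hΘ : MeasurableSet Θ) {D : Set ℝ} (hD : MeasurableSet D) :
    volume (Complex.arg ⁻¹' Θ ∩ g ⁻¹' D) ≤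
      ENNReal.ofReal (1 / (2 * m)) * volume D * volume Θ := by
  have hunit : ∀ θ : ℝ, ‖(Real.cos θ + Real.sin θ * Complex.I : ℂ)‖ = 1 := fun θ => by
    simp [Complex.norm_cos_add_sin_mul_I]
  calc volume (Complex.arg ⁻¹' Θ ∩ g ⁻¹' D)
      = ∫⁻ z in Complex.arg ⁻¹' Θ, (g ⁻¹' D).indicator 1 z := by
        rw [setLIntegral_indicator (hg hD), Set.inter_comm]
        simp only [Pi.one_apply, setLIntegral_one]
    _ = ∫⁻ θ in Set.Ioo (-Real.pi) Real.pi ∩ Θ, ∫⁻ s in Set.Ioi (0 : ℝ), ENNReal.ofReal s *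
          D.indicator 1 (g (s * (Real.cos θ + Real.sin θ * Complex.I))) :=
        setLIntegral_arg_preimage_eq (measurable_one.indicator (hg hD)) hΘ
    _ ≤ ∫⁻ _ in Set.Ioo (-Real.pi) Real.pi ∩ Θ, ENNReal.ofReal (1 / (2 * m)) * volume D :=
        lintegral_mono fun θ => lintegral_ofReal_mul_indicator_comp_le hm (hmono _ (hunit θ)) D
    _ ≤ ENNReal.ofReal (1 / (2 * m)) * volume D * volume Θ := by
        rw [setLIntegral_const]
        gcongr
        exact Set.inter_subset_right

lemma abs_arg_lt_arcsin_of_norm_sub_lt {z : ℂ} {r d : ℝ} (hrd : r ≤ d) (h : ‖z - d‖ < r) :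
    |Complex.arg z| < Real.arcsin (r / d) := by
  have hr : 0 < r := (norm_nonneg _).trans_lt h
  have hd : 0 < d := hr.trans_le hrd
  have hrd_sq : 0 ≤ d ^ 2 - r ^ 2 := sub_nonneg.2 (by gcongr)
  have hnorm : ‖z‖ ^ 2 = z.re ^ 2 + z.im ^ 2 := by
    rw [← Complex.normSq_eq_norm_sq, Complex.normSq_apply]
    ring
  have hcos : ‖z‖ ^ 2 + (d ^ 2 - r ^ 2) < 2 * (d * z.re) := by
    have hsq : ‖z - d‖ ^ 2 < r ^ 2 := by gcongr
    rw [← Complex.normSq_eq_norm_sq, Complex.normSq_apply] at hsq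
    simp only [Complex.sub_re, Complex.sub_im, Complex.ofReal_re, Complex.ofReal_im] at hsq
    linarith
  have hre : 0 < z.re := pos_of_mul_pos_right (a := d) (by nlinarith [sq_nonneg ‖z‖]) hd.le
  have hz : 0 < ‖z‖ := norm_pos_iff.2 fun hz => by simp [hz] at hre
  have hsin : (d * z.im) ^ 2 < (r * ‖z‖) ^ 2 := by
    -- AM-GM for the two terms on the left of `hcos`
    have hamgm : (d ^ 2 - r ^ 2) * ‖z‖ ^ 2 < (d * z.re) ^ 2 := by
      nlinarith [sq_nonneg (‖z‖ ^ 2 - (d ^ 2 - r ^ 2)), sq_nonneg ‖z‖]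
    linear_combination hamgm - d ^ 2 * hnorm
  have hlt : |z.im / ‖z‖| < r / d := by
    rw [abs_div, abs_norm, div_lt_div_iff₀ hz hd, mul_comm, ← abs_of_pos hd, ← abs_mul]
    exact abs_lt_of_sq_lt_sq hsin (by positivity)
  have hle : r / d ≤ 1 := (div_le_one hd).2 hrd
  rw [Complex.arg_of_re_nonneg hre.le, abs_lt, ← Real.arcsin_neg]
  rw [abs_lt] at hlt
  exact ⟨Real.arcsin_lt_arcsin (by linarith) hlt.1 (by linarith),
    Real.arcsin_lt_arcsin (by linarith) hlt.2 hle⟩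

end Radial

section StronglyConvex

variable {V : Type*} [NormedAddCommGroup V] [InnerProductSpace ℝ V] {ψ : V → ℝ} {m : ℝ}

lemma strongConvexOn_two_norm_sq_add {φ : V → ℝ} {s : Set V} (hφ : ConvexOn ℝ s φ) :
    StrongConvexOn s 2 fun y => ‖y‖ ^ 2 + φ y := by
  rw [strongConvexOn_iff_convex]
  simpa using hφ

lemma continuous_of_strongConvexOn_univ [FiniteDimensional ℝ V]
    (hψ : StrongConvexOn Set.univ m ψ) : Continuous ψ := by
  have hφ := (strongConvexOn_iff_convex.1 hψ).locallyLipschitz.continuous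
  simpa [Pi.add_def] using hφ.add (by fun_prop : Continuous fun y : V => m / 2 * ‖y‖ ^ 2)

lemma monotoneOn_Ici_of_convexOn_of_even {f : ℝ → ℝ} (hf : ConvexOn ℝ Set.univ f)
    (heven : Function.Even f) : MonotoneOn f (Set.Ici 0) := fun s hs t _ hst => by
  have hmax := hf.le_max_of_mem_Icc (Set.mem_univ (-t)) (Set.mem_univ t)
    ⟨by linarith [Set.mem_Ici.1 hs], hst⟩
  rwa [heven, max_self] at hmax

lemma monotoneOn_strongConvex_symmetrization (hψ : StrongConvexOn Set.univ m ψ) (c : V) {v : V}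
    (hv : ‖v‖ = 1) :
    MonotoneOn (fun s : ℝ => ψ (c + s • v) + ψ (c - s • v) - m * s ^ 2) (Set.Ici 0) := by
  set φ : V → ℝ := fun y => ψ y - m / 2 * ‖y‖ ^ 2
  have hφ : ConvexOn ℝ Set.univ φ := strongConvexOn_iff_convex.1 hψ
  have hline : ∀ w : V, ConvexOn ℝ Set.univ fun s : ℝ => φ (c + s • w) := fun w => by
    simpa [Function.comp_def, AffineMap.lineMap_apply, add_comm] using
      hφ.comp_affineMap (AffineMap.lineMap c (c + w))
  have hparallelogram : ∀ s : ℝ, ψ (c + s • v) + ψ (c - s • v) - m * s ^ 2 =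
      φ (c + s • v) + φ (c + s • -v) + m * ‖c‖ ^ 2 := fun s => by
    have h := parallelogram_law_with_norm ℝ c (s • v)
    rw [norm_smul, hv, mul_one, Real.norm_eq_abs, sq_abs] at h
    simp only [φ, smul_neg, ← sub_eq_add_neg]
    linear_combination (m / 2) * h
  refine monotoneOn_Ici_of_convexOn_of_even ?_ fun s => by
    simp only [neg_smul, sub_neg_eq_add, ← sub_eq_add_neg, even_two.neg_pow, add_comm]
  simp only [hparallelogram]
  exact ((hline v).add (hline (-v))).add_const _

end StronglyConvex

section Plane

lemma exists_linearIsometryEquiv_map_norm {V : Type*} [NormedAddCommGroup V]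
    [InnerProductSpace ℝ V] [FiniteDimensional ℝ V] (hV : Module.finrank ℝ V = 2) (v : V) :
    ∃ L : ℂ ≃ₗᵢ[ℝ] V, L (‖v‖ : ℂ) = v := by
  set e := Complex.isometryOfOrthonormal ((stdOrthonormalBasis ℝ V).reindex (finCongr hV))
  refine ⟨(rotation (Circle.exp (Complex.arg (e.symm v)))).trans e, ?_⟩
  rw [LinearIsometryEquiv.trans_apply, rotation_apply, Circle.coe_exp, ← e.symm.norm_map v,
    mul_comm, Complex.norm_mul_exp_arg_mul_I, e.apply_symm_apply]

variable {V : Type*} [NormedAddCommGroup V] [InnerProductSpace ℝ V] [FiniteDimensional ℝ V]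
  [MeasurableSpace V] [BorelSpace V] {ψ : V → ℝ} {m : ℝ}

lemma volume_sumFiber_le_of_arg_mem (hm : 0 < m) (hψ : StrongConvexOn Set.univ m ψ)
    (L : ℂ ≃ₗᵢ[ℝ] V) {S T : Set V} (c : V) {Θ : Set ℝ} (hΘ : MeasurableSet Θ)
    (hST : ∀ z, c + L z ∈ S → c - L z ∈ T → Complex.arg z ∈ Θ) {D : Set ℝ}
    (hD : MeasurableSet D) :
    volume (sumFiber ψ S T (c + c) D) ≤ ENNReal.ofReal (1 / (2 * m)) * volume D * volume Θ := by
  have hψc := continuous_of_strongConvexOn_univ hψ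
  have hcentre : MeasurePreserving (fun z => c + L z) volume volume :=
    (measurePreserving_add_left volume c).comp L.measurePreserving
  have hemb : MeasurableEmbedding fun z => c + L z :=
    (L.toHomeomorph.trans (Homeomorph.addLeft c)).measurableEmbedding
  rw [← hcentre.measure_preimage_emb hemb]
  refine (measure_mono fun z hz => ?_).trans
    (volume_arg_preimage_inter_preimage_le (g := fun z => ψ (c + L z) + ψ (c - L z))
      (by fun_prop) hm (fun z hz => ?_) hΘ hD)
  · have hreflect : c + c - (c + L z) = c - L z := by abel
    simp only [sumFiber, Set.mem_preimage, Set.mem_ofPred_eq, hreflect] at hz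
    exact ⟨hST z hz.1.1 hz.1.2, hz.2⟩
  · simpa only [← Complex.real_smul, map_smul] using
      monotoneOn_strongConvex_symmetrization hψ c ((L.norm_map z).trans hz)

lemma volume_sumFiber_ball_compl_ball_le (hV : Module.finrank ℝ V = 2) (hm : 0 < m)
    (hψ : StrongConvexOn Set.univ m ψ) {r ρ : ℝ} (hρ : 3 * r ≤ ρ) (y₀ ξ : V) {D : Set ℝ}
    (hD : MeasurableSet D) :
    volume (sumFiber ψ (Metric.ball y₀ r) (Metric.ball y₀ ρ)ᶜ ξ D) ≤
      ENNReal.ofReal (1 / m * Real.arcsin (2 * r / (ρ - r))) * volume D := by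
  obtain ⟨c, rfl⟩ : ∃ c, ξ = c + c := ⟨(1 / 2 : ℝ) • ξ, by module⟩
  obtain ⟨L, hL⟩ := exists_linearIsometryEquiv_map_norm hV (y₀ - c)
  set α := Real.arcsin (2 * r / (ρ - r))
  have hangle : ∀ z, c + L z ∈ Metric.ball y₀ r → c - L z ∈ (Metric.ball y₀ ρ)ᶜ →
      Complex.arg z ∈ Set.Ioo (-α) α := by
    intro z hnear hfar
    have hr : 0 < r := Metric.pos_of_mem_ball hnear
    rw [Set.mem_compl_iff, mem_ball_iff_norm, not_lt] at hfar
    rw [mem_ball_iff_norm] at hnear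
    have hdist : (ρ - r) / 2 ≤ ‖y₀ - c‖ := by
      have htri := norm_add_le (c + L z - y₀) ((2 : ℝ) • (y₀ - c))
      rw [norm_smul, Real.norm_two, ← norm_neg (c + L z - y₀ + _),
        show -(c + L z - y₀ + (2 : ℝ) • (y₀ - c)) = c - L z - y₀ by module] at htri
      linarith
    have hz : ‖z - (‖y₀ - c‖ : ℝ)‖ < r := by
      rwa [← L.norm_map, map_sub, hL, sub_sub_eq_add_sub, add_comm]
    refine abs_lt.1 ((abs_arg_lt_arcsin_of_norm_sub_lt (by linarith) hz).trans_le
      (Real.monotone_arcsin ?_))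
    calc r / ‖y₀ - c‖ ≤ r / ((ρ - r) / 2) := by gcongr; linarith
      _ = 2 * r / (ρ - r) := by rw [div_div_eq_mul_div, mul_comm]
  refine (volume_sumFiber_le_of_arg_mem hm hψ L c measurableSet_Ioo hangle hD).trans_eq ?_
  rw [Real.volume_Ioo, mul_right_comm, ← ENNReal.ofReal_mul (by positivity)]
  congr 2
  field_simp
  ring

lemma volume_sumFiber_univ_le (hV : Module.finrank ℝ V = 2) (hm : 0 < m)
    (hψ : StrongConvexOn Set.univ m ψ) (ξ : V) {D : Set ℝ} (hD : MeasurableSet D) :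
    volume (sumFiber ψ Set.univ Set.univ ξ D) ≤ ENNReal.ofReal (Real.pi / m) * volume D := by
  obtain ⟨c, rfl⟩ : ∃ c, ξ = c + c := ⟨(1 / 2 : ℝ) • ξ, by module⟩
  obtain ⟨L, -⟩ := exists_linearIsometryEquiv_map_norm hV (0 : V)
  refine (volume_sumFiber_le_of_arg_mem hm hψ L c measurableSet_Ioc
    (fun z _ _ => z.arg_mem_Ioc) hD).trans_eq ?_
  rw [Real.volume_Ioc, mul_right_comm, ← ENNReal.ofReal_mul (by positivity)]
  congr 2
  field_simp
  ring

lemma volume_sumFiber_le_of_disjoint (hV : Module.finrank ℝ V = 2) (hm : 0 < m)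
    (hψ : StrongConvexOn Set.univ m ψ) {S T : Set V} (hS : MeasurableSet S)
    (hT : MeasurableSet T) (hST : Disjoint S T) (ξ : V) {D : Set ℝ} (hD : MeasurableSet D) :
    volume (sumFiber ψ S T ξ D) ≤ ENNReal.ofReal (Real.pi / (2 * m)) * volume D := by
  have hψm := (continuous_of_strongConvexOn_univ hψ).measurable
  refine (ENNReal.mul_le_mul_iff_right two_ne_zero ENNReal.ofNat_ne_top).1 ?_
  calc 2 * volume (sumFiber ψ S T ξ D)
      ≤ volume (sumFiber ψ Set.univ Set.univ ξ D) :=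
        two_mul_measure_sumFiber_le hψm hS hT hST ξ hD
    _ ≤ ENNReal.ofReal (Real.pi / m) * volume D := volume_sumFiber_univ_le hV hm hψ ξ hD
    _ = 2 * (ENNReal.ofReal (Real.pi / (2 * m)) * volume D) := by
        rw [← mul_assoc, ← ENNReal.ofReal_ofNat 2, ← ENNReal.ofReal_mul zero_le_two]
        congr 2
        field_simp

end Plane

lemma wProj_indicator_one (Ψ : R2 → ℝ) {S : Set R2} (hS : MeasurableSet S) :
    wProj Ψ (S.indicator fun _ => (1 : ℝ)) = graphMeasure volume Ψ S := by
  have hdensity : (fun y => ENNReal.ofReal (S.indicator (fun _ => (1 : ℝ)) y)) =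
      S.indicator 1 := by
    ext y
    by_cases hy : y ∈ S <;> simp [hy]
  rw [wProj, hdensity, withDensity_indicator_one hS, graphMeasure]

lemma mconv_wProj_absolutelyContinuous_and_rnDeriv_le {Ψ : R2 → ℝ} (hΨ : Measurable Ψ)
    {S T : Set R2} (hS : MeasurableSet S) (hT : MeasurableSet T) {C : ℝ≥0∞}
    (h : ∀ ξ D, MeasurableSet D → volume (sumFiber Ψ S T ξ D) ≤ C * volume D) :
    mconv (wProj Ψ (S.indicator fun _ => (1 : ℝ)))
        (wProj Ψ (T.indicator fun _ => (1 : ℝ))) ≪ volume ∧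
      ∀ᵐ x ∂(volume : Measure R3),
        (mconv (wProj Ψ (S.indicator fun _ => (1 : ℝ)))
          (wProj Ψ (T.indicator fun _ => (1 : ℝ)))).rnDeriv volume x ≤ C := by
  rw [wProj_indicator_one Ψ hS, wProj_indicator_one Ψ hT]
  exact absolutelyContinuous_and_rnDeriv_le_of_le_smul (conv_graphMeasure_le_smul hΨ hS hT h)

theorem statement17_general {m : ℝ} (hm : 0 < m) {ψ : R2 → ℝ}
    (hψ : StrongConvexOn Set.univ m ψ) :
    (∀ (r ρ : ℝ) (y₀ : R2), 3 * r ≤ ρ →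
      mconv (wProj ψ ((Metric.ball y₀ r).indicator fun _ => (1 : ℝ)))
          (wProj ψ (((Metric.ball y₀ ρ)ᶜ).indicator fun _ => (1 : ℝ))) ≪ volume ∧
      ∀ᵐ x ∂(volume : Measure R3),
        (mconv (wProj ψ ((Metric.ball y₀ r).indicator fun _ => (1 : ℝ)))
            (wProj ψ (((Metric.ball y₀ ρ)ᶜ).indicator fun _ => (1 : ℝ)))).rnDeriv
            volume x ≤
          ENNReal.ofReal (1 / m * Real.arcsin (2 * r / (ρ - r)))) ∧
    ∀ S T : Set R2, MeasurableSet S → MeasurableSet T → Disjoint S T →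
      mconv (wProj ψ (S.indicator fun _ => (1 : ℝ)))
          (wProj ψ (T.indicator fun _ => (1 : ℝ))) ≪ volume ∧
      ∀ᵐ x ∂(volume : Measure R3),
        (mconv (wProj ψ (S.indicator fun _ => (1 : ℝ)))
            (wProj ψ (T.indicator fun _ => (1 : ℝ)))).rnDeriv
            volume x ≤ ENNReal.ofReal (Real.pi / (2 * m)) := by
  have hψm : Measurable ψ := (continuous_of_strongConvexOn_univ hψ).measurable
  have hdim : Module.finrank ℝ R2 = 2 := finrank_euclideanSpace_fin
  refine ⟨fun r ρ y₀ hρ => ?_, fun S T hS hT hST => ?_⟩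
  · exact mconv_wProj_absolutelyContinuous_and_rnDeriv_le hψm measurableSet_ball
      measurableSet_ball.compl fun ξ D => volume_sumFiber_ball_compl_ball_le hdim hm hψ hρ y₀ ξ
  · exact mconv_wProj_absolutelyContinuous_and_rnDeriv_le hψm hS hT
      fun ξ D => volume_sumFiber_le_of_disjoint hdim hm hψ hS hT hST ξ

theorem statement17 (φ : R2 → ℝ) (hφ0 : ∀ y, 0 ≤ φ y) (hφC2 : ContDiff ℝ 2 φ)
    (hφconv : StrictConvexOn ℝ Set.univ φ)
    (ψ : R2 → ℝ) (hψ : ψ = fun y => ‖y‖ ^ 2 + φ y) :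
    (∀ (r ρ : ℝ) (y₀ : R2), 0 < r → 0 < ρ → 3 * r < ρ →
      mconv (wProj ψ ((Metric.ball y₀ r).indicator fun _ => (1:ℝ)))
          (wProj ψ (((Metric.ball y₀ ρ)ᶜ).indicator fun _ => (1:ℝ))) ≪ volume ∧
      ∀ᵐ x ∂(volume : Measure R3),
        (mconv (wProj ψ ((Metric.ball y₀ r).indicator fun _ => (1:ℝ)))
            (wProj ψ (((Metric.ball y₀ ρ)ᶜ).indicator fun _ => (1:ℝ)))).rnDeriv
            volume x ≤
          ENNReal.ofReal ((1 / 2) * Real.arcsin (2 * r / (ρ - r)))) ∧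
    ∀ (y₁ y₂ : R2) (r₁ r₂ : ℝ), Disjoint (Metric.ball y₁ r₁) (Metric.ball y₂ r₂) →
      mconv (wProj ψ ((Metric.ball y₁ r₁).indicator fun _ => (1:ℝ)))
          (wProj ψ ((Metric.ball y₂ r₂).indicator fun _ => (1:ℝ))) ≪ volume ∧
      ∀ᵐ x ∂(volume : Measure R3),
        (mconv (wProj ψ ((Metric.ball y₁ r₁).indicator fun _ => (1:ℝ)))
            (wProj ψ ((Metric.ball y₂ r₂).indicator fun _ => (1:ℝ)))).rnDeriv
            volume x ≤ ENNReal.ofReal (Real.pi / 4) := by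
  obtain ⟨hball, hdisjoint⟩ := statement17_general two_pos
    (hψ ▸ strongConvexOn_two_norm_sq_add hφconv.convexOn : StrongConvexOn Set.univ 2 ψ)
  exact ⟨fun r ρ y₀ _ _ hρ => hball r ρ y₀ hρ.le, fun y₁ y₂ r₁ r₂ h => by
    convert hdisjoint _ _ measurableSet_ball measurableSet_ball h using 6; norm_num⟩
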